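/- arXiv:1904.07713 — 2 statements merged into one kernel-verified Lean document; each statement's English description precedes it below -/
import Mathlib

section
/- Let n ≥ 1, 0 < a < 1 and b = √(1 − a²). Let u : ℝⁿ → ℝ be a C² function with D²u(x) > −(a+b)I for all x ∈ ℝⁿ, satisfying (√(a²+1)/b) · Σ_{i=1}^n arctan((λ_i(D²u(x)) + a − b)/(λ_i(D²u(x)) + a + b)) = −u(x) + (1/2)⟨x, Du(x)⟩ for all x ∈ ℝⁿ. Define w(x) := (b/√(a²+1)) · u((a²+1)^{1/4} x / b) + (a/(2b))|x|² − nπ/4. Then w satisfies the special Lagrangian self-shrinker equation Σ_{i=1}^n arctan(λ_i(D²w(x))) = −w(x) + (1/2)⟨x, Dw(x)⟩ for all x ∈ ℝⁿ. -/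
open Real Filter Matrix
open scoped RealInnerProductSpace

noncomputable section

/-- The Hessian matrix of `u` at `x`, with entries the second iterated derivatives
in the coordinate directions. -/
def Hess (n : ℕ) (u : EuclideanSpace ℝ (Fin n) → ℝ) (x : EuclideanSpace ℝ (Fin n)) :
    Matrix (Fin n) (Fin n) ℝ :=
  Matrix.of fun i j =>
    iteratedFDeriv ℝ 2 u x ![EuclideanSpace.single i 1, EuclideanSpace.single j 1]

open Classical in
/-- The eigenvalues of a real symmetric matrix (junk value `0` if not symmetric). -/
def eigs {n : ℕ} (A : Matrix (Fin n) (Fin n) ℝ) : Fin n → ℝ :=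
  if h : A.IsHermitian then h.eigenvalues else 0

/-- `u` is a quadratic polynomial:
`u x = (1/2)⟨x, A x⟩ + ⟨β, x⟩ + c` with `A` symmetric. -/
def IsQuadPoly (n : ℕ) (u : EuclideanSpace ℝ (Fin n) → ℝ) : Prop :=
  ∃ (A : Matrix (Fin n) (Fin n) ℝ) (β : EuclideanSpace ℝ (Fin n)) (c : ℝ), A.IsSymm ∧
    ∀ x, u x = (1/2) * (∑ i, ∑ j, A i j * x i * x j) + ⟪β, x⟫ + c

/-!
Write `w x = p * u (c • x) + q * ‖x‖ ^ 2 - r`. The right-hand side `-u + ⟪x, ∇u⟫ / 2` of a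
self-shrinker equation vanishes on 2-homogeneous functions, so it does not see the quadratic term:
for `w` it is `p` times its value for `u` at `c • x`, plus `r`. On the left, every Hessian
eigenvalue `λ` of `u` becomes `p * c ^ 2 * λ + 2 * q`, which is `(λ + a) / b` for the constants at
hand, and the tangent subtraction formula gives
`arctan ((λ + a) / b) = arctan ((λ + a - b) / (λ + a + b)) + π / 4` as long as `λ + a + b > 0`.
-/

open scoped Topology

theorem rpow_one_fourth_sq {y : ℝ} (hy : 0 ≤ y) : (y ^ ((1 : ℝ) / 4)) ^ 2 = √y := by
  rw [Real.sqrt_eq_rpow, ← Real.rpow_mul_natCast hy]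
  norm_num

theorem arctan_sub_div_add {y b : ℝ} (hb : 0 < b) (hyb : 0 < y + b) :
    arctan ((y - b) / (y + b)) = arctan (y / b) - π / 4 := by
  have hlt : y / b * -1 < 1 := by
    rw [mul_neg_one, neg_lt, lt_div_iff₀ hb]
    linarith
  have hquot : (y / b + -1) / (1 - y / b * -1) = (y - b) / (y + b) := by
    rw [mul_neg_one, sub_neg_eq_add, ← sub_eq_add_neg, add_comm y b]
    field_simp
  rw [← arctan_one, sub_eq_add_neg (arctan _), ← arctan_neg, arctan_add hlt, hquot]

section Eigenvalues

theorem isHermitian_of_add_smul_one {S R m : Type*} [Star S] [Ring R] [StarRing R]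
    [SMul S R] [StarModule S R] [DecidableEq m] {A : Matrix m m R} {β : S} (hβ : IsSelfAdjoint β)
    (h : (A + β • (1 : Matrix m m R)).IsHermitian) : A.IsHermitian := by
  simpa only [add_sub_cancel_right] using h.sub (Matrix.isHermitian_one.smul hβ)

theorem map_eigenvalues_cfc {𝕜 m : Type*} [RCLike 𝕜] [Fintype m] [DecidableEq m]
    {A : Matrix m m 𝕜} (hA : A.IsHermitian) (f : ℝ → ℝ) (hfA : (cfc f A).IsHermitian) :
    Finset.univ.val.map hfA.eigenvalues = Finset.univ.val.map (f ∘ hA.eigenvalues) := by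
  refine Multiset.map_injective (RCLike.ofReal_injective (K := 𝕜)) ?_
  have hprod : (cfc f A).charpoly = (((Finset.univ.val.map (f ∘ hA.eigenvalues)).map
      (RCLike.ofReal : ℝ → 𝕜)).map fun l => Polynomial.X - Polynomial.C l).prod := by
    simp only [hA.charpoly_cfc_eq, Multiset.map_map]
    rfl
  rw [← Polynomial.roots_multiset_prod_X_sub_C (Multiset.map _ (Multiset.map (f ∘ _) _)), ← hprod,
    hfA.roots_charpoly_eq_eigenvalues, Multiset.map_map]

variable {n : ℕ} {A : Matrix (Fin n) (Fin n) ℝ}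

theorem eigs_eq_eigenvalues (hA : A.IsHermitian) : eigs A = hA.eigenvalues :=
  dif_pos hA

theorem sum_comp_eigs_cfc (hA : A.IsHermitian) (f g : ℝ → ℝ) :
    ∑ i, g (eigs (cfc f A) i) = ∑ i, g (f (eigs A i)) := by
  have hfA : (cfc f A).IsHermitian := cfc_predicate f A
  rw [eigs_eq_eigenvalues hA, eigs_eq_eigenvalues hfA]
  have hmap := congrArg (fun s => (s.map g).sum) (map_eigenvalues_cfc hA f hfA)
  simp only [Multiset.map_map] at hmap
  exact hmap

theorem sum_comp_eigs_smul_add_smul_one (hA : A.IsHermitian) (α β : ℝ) (g : ℝ → ℝ) :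
    ∑ i, g (eigs (α • A + β • (1 : Matrix (Fin n) (Fin n) ℝ)) i) = ∑ i, g (α * eigs A i + β) := by
  have hcfc : cfc (fun t => α * t + β) A = α • A + β • (1 : Matrix (Fin n) (Fin n) ℝ) := by
    have hA' : IsSelfAdjoint A := hA
    rw [cfc_add_const .., cfc_const_mul_id .., Algebra.algebraMap_eq_smul_one]
  rw [← hcfc, sum_comp_eigs_cfc hA]

theorem eigs_add_pos_of_posDef {β : ℝ} (h : (A + β • (1 : Matrix (Fin n) (Fin n) ℝ)).PosDef)
    (i : Fin n) : 0 < eigs A i + β := by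
  have hA := isHermitian_of_add_smul_one (.all β) h.isHermitian
  have hmem : eigs A i + β ∈ spectrum ℝ (A + β • (1 : Matrix (Fin n) (Fin n) ℝ)) := by
    rw [eigs_eq_eigenvalues hA, ← Algebra.algebraMap_eq_smul_one, add_comm A,
      spectrum.add_mem_add_iff]
    exact hA.eigenvalues_mem_spectrum_real i
  rw [h.isHermitian.spectrum_real_eq_range_eigenvalues] at hmem
  obtain ⟨j, hj⟩ := hmem
  exact hj ▸ h.eigenvalues_pos j

end Eigenvalues

section Rescaling

theorem hasFDerivAt_comp_const_smul {𝕜 V W : Type*} [NontriviallyNormedField 𝕜]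
    [NormedAddCommGroup V] [NormedSpace 𝕜 V] [NormedAddCommGroup W] [NormedSpace 𝕜 W]
    {f : V → W} {f' : V →L[𝕜] W} {c : 𝕜} {x : V} (hf : HasFDerivAt f f' (c • x)) :
    HasFDerivAt (fun y => f (c • y)) (c • f') x :=
  hasFDerivWithinAt_univ.1 (hasFDerivWithinAt_comp_smul_smul_iff.2 hf.hasFDerivWithinAt)

variable {E : Type*} [NormedAddCommGroup E] [InnerProductSpace ℝ E]

/-- The rescaling `x ↦ p * u (c • x) + q * ‖x‖ ^ 2 - r` of `u` with an added quadratic term, the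
form of the substitution that turns `u` into `w`. -/
def quadRescale (p c q r : ℝ) (u : E → ℝ) (x : E) : ℝ :=
  p * u (c • x) + q * ‖x‖ ^ 2 - r

variable (p c q r : ℝ) {u : E → ℝ} {x : E}

theorem hasFDerivAt_quadRescale {u' : E →L[ℝ] ℝ} (hu : HasFDerivAt u u' (c • x)) :
    HasFDerivAt (quadRescale p c q r u) ((p * c) • u' + (2 * q) • innerSL ℝ x) x := by
  have hcomp : HasFDerivAt (fun y => u (c • y)) (c • u') x :=
    hasFDerivAt_comp_const_smul hu
  have hnorm : HasFDerivAt (fun y : E => ‖y‖ ^ 2) (2 • innerSL ℝ x) x :=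
    (hasStrictFDerivAt_norm_sq x).hasFDerivAt
  refine (((hcomp.const_mul p).add (hnorm.const_mul q)).sub_const r).congr_fderiv ?_
  module

theorem fderiv_fderiv_quadRescale_apply (hu : ∀ᶠ y in 𝓝 (c • x), DifferentiableAt ℝ u y)
    (hu' : DifferentiableAt ℝ (fderiv ℝ u) (c • x)) (v z : E) :
    fderiv ℝ (fderiv ℝ (quadRescale p c q r u)) x v z
      = p * c ^ 2 * fderiv ℝ (fderiv ℝ u) (c • x) v z + 2 * q * ⟪v, z⟫ := by
  have hcont : Tendsto (c • ·) (𝓝 x) (𝓝 (c • x)) := (continuous_const_smul c).tendsto x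
  have hfderiv : fderiv ℝ (quadRescale p c q r u)
      =ᶠ[𝓝 x] fun y => (p * c) • fderiv ℝ u (c • y) + (2 * q) • innerSL ℝ y :=
    (hcont.eventually hu).mono fun y hy => (hasFDerivAt_quadRescale p c q r hy.hasFDerivAt).fderiv
  have hcomp : HasFDerivAt (fun y => fderiv ℝ u (c • y)) (c • fderiv ℝ (fderiv ℝ u) (c • x)) x :=
    hasFDerivAt_comp_const_smul hu'.hasFDerivAt
  have hinner : HasFDerivAt (fun y : E => innerSL ℝ y) (innerSL ℝ) x :=
    (innerSL ℝ : E →L[ℝ] _).hasFDerivAt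
  rw [(((hcomp.const_smul (p * c)).add (hinner.const_smul (2 * q))).congr_of_eventuallyEq
    hfderiv).fderiv]
  -- `innerSL ℝ` is conjugate-linear by type, so its action is only reached by unfolding.
  change p * c * (c * fderiv ℝ (fderiv ℝ u) (c • x) v z) + 2 * q * ⟪v, z⟫ = _
  ring

/-- The right-hand side `-u + ⟪x, ∇u⟫ / 2` of a self-shrinker equation. By Euler's identity it
measures the failure of `u` to be homogeneous of degree two. -/
def eulerDefect [CompleteSpace E] (u : E → ℝ) (x : E) : ℝ :=
  -u x + (1 / 2) * ⟪x, gradient u x⟫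

theorem eulerDefect_eq_fderiv [CompleteSpace E] (u : E → ℝ) (x : E) :
    eulerDefect u x = -u x + (1 / 2) * fderiv ℝ u x x := by
  rw [eulerDefect, real_inner_comm, inner_gradient_left]

theorem eulerDefect_quadRescale [CompleteSpace E] (hu : DifferentiableAt ℝ u (c • x)) :
    eulerDefect (quadRescale p c q r u) x = p * eulerDefect u (c • x) + r := by
  rw [eulerDefect_eq_fderiv, eulerDefect_eq_fderiv,
    (hasFDerivAt_quadRescale p c q r hu.hasFDerivAt).fderiv, quadRescale]
  simp only [_root_.add_apply, _root_.smul_apply, smul_eq_mul, innerSL_apply_apply,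
    real_inner_self_eq_norm_sq, map_smul]
  ring

end Rescaling

section SelfShrinker

variable {n : ℕ} {u : EuclideanSpace ℝ (Fin n) → ℝ} {x : EuclideanSpace ℝ (Fin n)} {p c q : ℝ}

theorem hess_apply (u : EuclideanSpace ℝ (Fin n) → ℝ) (x : EuclideanSpace ℝ (Fin n))
    (i j : Fin n) :
    Hess n u x i j
      = fderiv ℝ (fderiv ℝ u) x (EuclideanSpace.single i 1) (EuclideanSpace.single j 1) := by
  simp [Hess, iteratedFDeriv_two_apply]

theorem hess_quadRescale (r : ℝ) (hu : ∀ᶠ y in 𝓝 (c • x), DifferentiableAt ℝ u y)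
    (hu' : DifferentiableAt ℝ (fderiv ℝ u) (c • x)) :
    Hess n (quadRescale p c q r u) x
      = (p * c ^ 2) • Hess n u (c • x) + (2 * q) • (1 : Matrix (Fin n) (Fin n) ℝ) := by
  ext i j
  simp [hess_apply, fderiv_fderiv_quadRescale_apply p c q r hu hu', Matrix.one_apply,
    EuclideanSpace.inner_single_left]

/-- The self-shrinker equation `∑ f (λᵢ) = -u + ⟪x, ∇u⟫ / 2` at the point `x`, where the `λᵢ` are
the eigenvalues of the Hessian of `u`. The choice `f = arctan` is the special Lagrangian one. -/
def IsSelfShrinkerAt (f : ℝ → ℝ) (u : EuclideanSpace ℝ (Fin n) → ℝ)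
    (x : EuclideanSpace ℝ (Fin n)) : Prop :=
  ∑ i, f (eigs (Hess n u x) i) = eulerDefect u x

theorem isSelfShrinkerAt_quadRescale_iff {f g : ℝ → ℝ} {ρ : ℝ} (hp : p ≠ 0)
    (hu : ∀ᶠ y in 𝓝 (c • x), DifferentiableAt ℝ u y)
    (hu' : DifferentiableAt ℝ (fderiv ℝ u) (c • x)) (hH : (Hess n u (c • x)).IsHermitian)
    (hfg : ∀ i, g (p * c ^ 2 * eigs (Hess n u (c • x)) i + 2 * q)
      = p * f (eigs (Hess n u (c • x)) i) + ρ) :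
    IsSelfShrinkerAt g (quadRescale p c q (n * ρ) u) x ↔ IsSelfShrinkerAt f u (c • x) := by
  have hsum : ∑ i, g (eigs (Hess n (quadRescale p c q (n * ρ) u) x) i)
      = p * ∑ i, f (eigs (Hess n u (c • x)) i) + n * ρ := by
    rw [hess_quadRescale _ hu hu', sum_comp_eigs_smul_add_smul_one hH]
    simp [hfg, Finset.sum_add_distrib, Finset.mul_sum]
  rw [IsSelfShrinkerAt, hsum, eulerDefect_quadRescale _ _ _ _ hu.self_of_nhds, add_left_inj,
    mul_right_inj' hp, IsSelfShrinkerAt]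

end SelfShrinker

theorem transform_to_special_lagrangian_general (n : ℕ) (a b s t : ℝ) (hb : 0 < b) (hs : s ≠ 0)
    (hts : t ^ 2 = s) (u : EuclideanSpace ℝ (Fin n) → ℝ) (x : EuclideanSpace ℝ (Fin n))
    (hu : ∀ᶠ y in 𝓝 ((t / b) • x), DifferentiableAt ℝ u y)
    (hu' : DifferentiableAt ℝ (fderiv ℝ u) ((t / b) • x))
    (hadm : (Hess n u ((t / b) • x) + (a + b) • (1 : Matrix (Fin n) (Fin n) ℝ)).PosDef)
    (w : EuclideanSpace ℝ (Fin n) → ℝ)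
    (hw : ∀ y, w y = (b / s) * u ((t / b) • y) + (a / (2 * b)) * ‖y‖ ^ 2 - n * π / 4) :
    ∑ i, arctan (eigs (Hess n w x) i) = -w x + (1 / 2) * ⟪x, gradient w x⟫ ↔
      (s / b) * ∑ i, arctan ((eigs (Hess n u ((t / b) • x)) i + a - b)
          / (eigs (Hess n u ((t / b) • x)) i + a + b))
        = -u ((t / b) • x) + (1 / 2) * ⟪(t / b) • x, gradient u ((t / b) • x)⟫ := by
  have hw' : w = quadRescale (b / s) (t / b) (a / (2 * b)) (n * (π / 4)) u :=
    funext fun y => by rw [hw, quadRescale, mul_div_assoc]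
  rw [hw', Finset.mul_sum]
  refine isSelfShrinkerAt_quadRescale_iff (f := fun l => s / b * arctan ((l + a - b) / (l + a + b)))
    (div_ne_zero hb.ne' hs) hu hu' (isHermitian_of_add_smul_one (.all _) hadm.isHermitian)
    fun i => ?_
  have hpos := eigs_add_pos_of_posDef hadm i
  generalize eigs (Hess n u ((t / b) • x)) i = l at hpos ⊢
  have hcoeff : b / s * (t / b) ^ 2 * l + 2 * (a / (2 * b)) = (l + a) / b := by
    rw [div_pow, hts]; field_simp
  have hscale : b / s * (s / b) = 1 := by field_simp
  rw [hcoeff, ← mul_assoc, hscale, one_mul, arctan_sub_div_add hb (by linarith), sub_add_cancel]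

theorem transform_to_special_lagrangian (n : ℕ) (hn : 1 ≤ n) (a b : ℝ)
    (ha0 : 0 < a) (ha1 : a < 1) (hb : b = Real.sqrt (1 - a ^ 2))
    (u : EuclideanSpace ℝ (Fin n) → ℝ)
    (hu : ContDiff ℝ 2 u)
    (hadm : ∀ x, (Hess n u x + (a + b) • (1 : Matrix (Fin n) (Fin n) ℝ)).PosDef)
    (heq : ∀ x, (Real.sqrt (a ^ 2 + 1) / b) *
        ∑ i, Real.arctan ((eigs (Hess n u x) i + a - b) / (eigs (Hess n u x) i + a + b))
      = -u x + (1/2) * ⟪x, gradient u x⟫)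
    (w : EuclideanSpace ℝ (Fin n) → ℝ)
    (hw : ∀ x, w x = (b / Real.sqrt (a ^ 2 + 1)) * u (((a ^ 2 + 1) ^ ((1:ℝ)/4) / b) • x)
      + (a / (2 * b)) * ‖x‖ ^ 2 - n * π / 4) :
    ∀ x, ∑ i, Real.arctan (eigs (Hess n w x) i)
      = -w x + (1/2) * ⟪x, gradient w x⟫ := fun x =>
  (transform_to_special_lagrangian_general n a b _ _ (hb ▸ Real.sqrt_pos.2 (by nlinarith))
    (by positivity) (rpow_one_fourth_sq (by positivity)) u x
    (.of_forall (hu.differentiable two_ne_zero))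
    ((hu.fderiv_right (m := 1) le_rfl).differentiable one_ne_zero _) (hadm _) w hw).2 (heq _)
end
end

section
/- There exists a smooth function w₁ : ℝ → ℝ such that 0 < w₁''(t) < 1 for all t ∈ ℝ, w₁ satisfies w₁''(t)/(1 − w₁''(t)) = exp((1/2) t w₁'(t) − w₁(t)) for all t ∈ ℝ, and w₁ is not a quadratic polynomial (i.e. w₁'' is not constant). -/
open Real

/-!
Solving the equation for `w''` gives `w'' = σ(½ t w' - w)` with `σ` the logistic sigmoid, so the
bounds `0 < w'' < 1` hold automatically. As a first-order system for `(w, w')` the right-hand side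
is smooth and Lipschitz in the state, locally uniformly in time, so every initial value problem has
a smooth solution on all of `ℝ`. For a quadratic solution `αt² + βt + c` the exponent
`½ t w' - w = -½βt - c` has to be constant, so `w'(0) = β = 0`; hence the solution with `w'(0) = 1`
is not quadratic.
-/

open Set Metric
open scoped ContDiff NNReal Topology

section IntegralCurve

variable {E : Type*} [NormedAddCommGroup E] [NormedSpace ℝ E] {v : ℝ → E → E}

lemma isIntegralCurveOn_union {γ : ℝ → E} {s t : Set ℝ} (hs : IsClosed s) (ht : IsClosed t)
    (hγs : IsIntegralCurveOn γ v s) (hγt : IsIntegralCurveOn γ v t) :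
    IsIntegralCurveOn γ v (s ∪ t) := by
  have hasDerivWithinAt_of_isClosed {u : Set ℝ} (hu : IsClosed u) (hγu : IsIntegralCurveOn γ v u)
      (τ : ℝ) : HasDerivWithinAt γ (v τ (γ τ)) u τ := by
    by_cases hτ : τ ∈ u
    · exact hγu τ hτ
    · exact HasFDerivWithinAt.of_notMem_closure (hu.closure_eq.symm ▸ hτ)
  exact fun τ _ ↦
    (hasDerivWithinAt_of_isClosed hs hγs τ).union (hasDerivWithinAt_of_isClosed ht hγt τ)

lemma isIntegralCurveOn_congr {γ γ' : ℝ → E} {s : Set ℝ} (hγ : IsIntegralCurveOn γ v s)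
    (h : EqOn γ' γ s) : IsIntegralCurveOn γ' v s := by
  intro t ht
  rw [h ht]
  exact (hγ t ht).congr h (h ht)

lemma exists_eqOn_isIntegralCurveOn_Icc_of_eq {γ₁ γ₂ : ℝ → E} {a m b : ℝ} (ham : a ≤ m)
    (hmb : m ≤ b) (h₁ : IsIntegralCurveOn γ₁ v (Icc a m)) (h₂ : IsIntegralCurveOn γ₂ v (Icc m b))
    (hm : γ₁ m = γ₂ m) :
    ∃ γ : ℝ → E, EqOn γ γ₁ (Icc a m) ∧ EqOn γ γ₂ (Icc m b) ∧ IsIntegralCurveOn γ v (Icc a b) := by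
  classical
  have eqOn_left : EqOn ((Iic m).piecewise γ₁ γ₂) γ₁ (Icc a m) :=
    (piecewise_eqOn _ _ _).mono fun _ ht ↦ ht.2
  have eqOn_right : EqOn ((Iic m).piecewise γ₁ γ₂) γ₂ (Icc m b) := by
    intro t ht
    rcases ht.1.eq_or_lt with rfl | hlt
    · rw [piecewise_eq_of_mem _ _ _ self_mem_Iic, hm]
    · exact piecewise_eq_of_notMem _ _ _ hlt.not_ge
  refine ⟨_, eqOn_left, eqOn_right, ?_⟩
  rw [← Icc_union_Icc_eq_Icc ham hmb]
  exact isIntegralCurveOn_union isClosed_Icc isClosed_Icc (isIntegralCurveOn_congr h₁ eqOn_left)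
    (isIntegralCurveOn_congr h₂ eqOn_right)

lemma eqOn_ball_of_isIntegralCurveOn {γ γ' : ℝ → E} {t₀ r : ℝ} {K : ℝ≥0}
    (hlip : ∀ t ∈ ball t₀ r, LipschitzWith K (v t)) (hγ : IsIntegralCurveOn γ v (ball t₀ r))
    (hγ' : IsIntegralCurveOn γ' v (ball t₀ r)) (h : γ t₀ = γ' t₀) : EqOn γ γ' (ball t₀ r) := by
  intro t ht
  have ht₀ : t₀ ∈ ball t₀ r := mem_ball_self (dist_nonneg.trans_lt ht)
  have hnhds {s : ℝ} (hs : s ∈ ball t₀ r) : ball t₀ r ∈ 𝓝 s := isOpen_ball.mem_nhds hs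
  rw [Real.ball_eq_Ioo] at *
  exact ODE_solution_unique_of_mem_Ioo (s := fun _ ↦ univ)
    (fun s hs ↦ (hlip s hs).lipschitzOnWith) ht₀
    (fun s hs ↦ ⟨(hγ s hs).hasDerivAt (hnhds hs), mem_univ _⟩)
    (fun s hs ↦ ⟨(hγ' s hs).hasDerivAt (hnhds hs), mem_univ _⟩) h ht

lemma isIntegralCurve_of_forall_isIntegralCurveOn_ball {t₀ : ℝ} {x₀ : E} {γ : ℝ → ℝ → E}
    (hlip : ∀ r, ∃ K : ℝ≥0, ∀ t ∈ ball t₀ r, LipschitzWith K (v t)) (hγ₀ : ∀ r, γ r t₀ = x₀)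
    (hγ : ∀ r, IsIntegralCurveOn (γ r) v (ball t₀ r)) :
    IsIntegralCurve (fun t ↦ γ (dist t t₀ + 1) t) v := by
  have eqOn_of_le {r R : ℝ} (hrR : r ≤ R) : EqOn (γ r) (γ R) (ball t₀ r) := by
    obtain ⟨K, hK⟩ := hlip r
    exact eqOn_ball_of_isIntegralCurveOn hK (hγ r) ((hγ R).mono (ball_subset_ball hrR))
      ((hγ₀ r).trans (hγ₀ R).symm)
  have mem_ball_dist_add_one (t : ℝ) : t ∈ ball t₀ (dist t t₀ + 1) :=
    mem_ball.2 (lt_add_one _)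
  have eqOn_glued (r : ℝ) : EqOn (fun t ↦ γ (dist t t₀ + 1) t) (γ r) (ball t₀ r) := by
    intro t ht
    rcases le_total r (dist t t₀ + 1) with hle | hle
    · exact (eqOn_of_le hle ht).symm
    · exact eqOn_of_le hle (mem_ball_dist_add_one t)
  intro t
  have ht := mem_ball_dist_add_one t
  exact (isIntegralCurveOn_congr (hγ _) (eqOn_glued _) t ht).hasDerivAt (isOpen_ball.mem_nhds ht)

variable [CompleteSpace E]

lemma contDiff_of_isIntegralCurve {γ : ℝ → E} {n : ℕ∞}
    (hv : ContDiff ℝ n (Function.uncurry v)) (hγ : IsIntegralCurve γ v) : ContDiff ℝ n γ :=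
  contDiff_iff_contDiffAt.2 fun t ↦
    (ODE.contDiffOn_enat_Icc_of_hasDerivWithinAt hv.contDiffOn
      (fun s _ ↦ (hγ s).hasDerivWithinAt) (mapsTo_univ _ _)).contDiffAt
      (Icc_mem_nhds (sub_one_lt t) (lt_add_one t))

/- If `C` bounds `‖v t x₀‖`, then `C + K R` bounds `v` on the ball of radius `R` about `x₀`; as
`K (b - a) ≤ 1/2`, the choice `R = 2 C (b - a)` keeps the solution inside that ball. -/
lemma exists_isIntegralCurveOn_Icc_of_mul_le_half {a b t₀ : ℝ} {K : ℝ≥0}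
    (hlip : ∀ t ∈ Icc a b, LipschitzWith K (v t))
    (hcont : ∀ x, ContinuousOn (v · x) (Icc a b)) (ht₀ : t₀ ∈ Icc a b)
    (hsmall : K * (b - a) ≤ 1 / 2) (x₀ : E) :
    ∃ γ : ℝ → E, γ t₀ = x₀ ∧ IsIntegralCurveOn γ v (Icc a b) := by
  have hab : 0 ≤ b - a := sub_nonneg.2 (ht₀.1.trans ht₀.2)
  obtain ⟨C, hC⟩ := isCompact_Icc.exists_bound_of_continuousOn (hcont x₀)
  have hC₀ : 0 ≤ C := (norm_nonneg _).trans (hC t₀ ht₀)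
  lift C to ℝ≥0 using hC₀
  obtain ⟨R, hR⟩ : ∃ R : ℝ≥0, (R : ℝ) = 2 * C * (b - a) := ⟨⟨_, by positivity⟩, rfl⟩
  have norm_le : ∀ t ∈ Icc a b, ∀ x ∈ closedBall x₀ (R : ℝ), ‖v t x‖ ≤ C + K * R := by
    intro t ht x hx
    calc ‖v t x‖ ≤ ‖v t x₀‖ + dist (v t x) (v t x₀) := by
          rw [dist_eq_norm]; exact norm_le_insert' _ _
      _ ≤ C + K * R := add_le_add (hC t ht) ((hlip t ht).dist_le_mul_of_le hx)
  have stays_in_ball : (C + K * R) * max (b - t₀) (t₀ - a) ≤ R := by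
    calc (C + K * R) * max (b - t₀) (t₀ - a) ≤ (C + K * R) * (b - a) := by
          gcongr
          exact max_le (by linarith [ht₀.1]) (by linarith [ht₀.2])
      _ = C * (b - a) + K * (b - a) * R := by ring
      _ ≤ C * (b - a) + 1 / 2 * R := by gcongr
      _ = R := by rw [hR]; ring
  have hv : IsPicardLindelof v (⟨t₀, ht₀⟩ : Icc a b) x₀ R 0 (C + K * R) K :=
    { lipschitzOnWith := fun t ht ↦ (hlip t ht).lipschitzOnWith
      continuousOn := fun x _ ↦ hcont x
      norm_le := norm_le
      mul_max_le := by simpa using stays_in_ball }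
  exact hv.exists_eq_forall_mem_Icc_hasDerivWithinAt₀

/- Bisection: solve on the half of `[a, b]` containing `t₀`, then restart from the midpoint. -/
lemma exists_isIntegralCurveOn_Icc_of_mul_le_two_pow (n : ℕ) {a b t₀ : ℝ} {K : ℝ≥0}
    (hlip : ∀ t ∈ Icc a b, LipschitzWith K (v t))
    (hcont : ∀ x, ContinuousOn (v · x) (Icc a b)) (ht₀ : t₀ ∈ Icc a b)
    (hn : K * (b - a) ≤ 2 ^ n / 2) (x₀ : E) :
    ∃ γ : ℝ → E, γ t₀ = x₀ ∧ IsIntegralCurveOn γ v (Icc a b) := by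
  induction n generalizing a b t₀ x₀ with
  | zero =>
    exact exists_isIntegralCurveOn_Icc_of_mul_le_half hlip hcont ht₀ (by simpa using hn) x₀
  | succ n ih =>
    have hab : a ≤ b := ht₀.1.trans ht₀.2
    obtain ⟨m, hm⟩ : ∃ m, m = (a + b) / 2 := ⟨_, rfl⟩
    have ham : a ≤ m := by linarith
    have hmb : m ≤ b := by linarith
    have exists_on_half {c d s : ℝ} (hac : a ≤ c) (hdb : d ≤ b) (hcd : d - c = (b - a) / 2)
        (hs : s ∈ Icc c d) (x : E) : ∃ γ : ℝ → E, γ s = x ∧ IsIntegralCurveOn γ v (Icc c d) := by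
      have hsub : Icc c d ⊆ Icc a b := Icc_subset_Icc hac hdb
      refine ih (fun t ht ↦ hlip t (hsub ht)) (fun y ↦ (hcont y).mono hsub) hs ?_ x
      rw [pow_succ] at hn
      rw [hcd]
      linarith
    have exists_left {s : ℝ} := exists_on_half (c := a) (d := m) (s := s) le_rfl hmb (by linarith)
    have exists_right {s : ℝ} := exists_on_half (c := m) (d := b) (s := s) ham le_rfl (by linarith)
    rcases le_total t₀ m with ht₀m | hmt₀
    · have ht₀' : t₀ ∈ Icc a m := ⟨ht₀.1, ht₀m⟩
      obtain ⟨γ₁, hγ₁, h₁⟩ := exists_left ht₀' x₀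
      obtain ⟨γ₂, hγ₂, h₂⟩ := exists_right (left_mem_Icc.2 hmb) (γ₁ m)
      obtain ⟨γ, hγ, -, h⟩ := exists_eqOn_isIntegralCurveOn_Icc_of_eq ham hmb h₁ h₂ hγ₂.symm
      exact ⟨γ, (hγ ht₀').trans hγ₁, h⟩
    · have ht₀' : t₀ ∈ Icc m b := ⟨hmt₀, ht₀.2⟩
      obtain ⟨γ₂, hγ₂, h₂⟩ := exists_right ht₀' x₀
      obtain ⟨γ₁, hγ₁, h₁⟩ := exists_left (right_mem_Icc.2 ham) (γ₂ m)
      obtain ⟨γ, -, hγ, h⟩ := exists_eqOn_isIntegralCurveOn_Icc_of_eq ham hmb h₁ h₂ hγ₁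
      exact ⟨γ, (hγ ht₀').trans hγ₂, h⟩

theorem exists_isIntegralCurveOn_Icc_of_lipschitzWith {a b t₀ : ℝ} {K : ℝ≥0}
    (hlip : ∀ t ∈ Icc a b, LipschitzWith K (v t))
    (hcont : ∀ x, ContinuousOn (v · x) (Icc a b)) (ht₀ : t₀ ∈ Icc a b) (x₀ : E) :
    ∃ γ : ℝ → E, γ t₀ = x₀ ∧ IsIntegralCurveOn γ v (Icc a b) := by
  obtain ⟨n, hn⟩ := pow_unbounded_of_one_lt (2 * (K * (b - a))) one_lt_two
  exact exists_isIntegralCurveOn_Icc_of_mul_le_two_pow n hlip hcont ht₀ (by linarith) x₀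

theorem exists_isIntegralCurve_of_lipschitzWith
    (hlip : ∀ a b, ∃ K : ℝ≥0, ∀ t ∈ Icc a b, LipschitzWith K (v t))
    (hcont : ∀ x, Continuous (v · x)) (t₀ : ℝ) (x₀ : E) :
    ∃ γ : ℝ → E, γ t₀ = x₀ ∧ IsIntegralCurve γ v := by
  have exists_on_ball (r : ℝ) : ∃ γ : ℝ → E, γ t₀ = x₀ ∧ IsIntegralCurveOn γ v (ball t₀ r) := by
    obtain ⟨K, hK⟩ := hlip (t₀ - |r|) (t₀ + |r|)
    obtain ⟨γ, hγ₀, hγ⟩ := exists_isIntegralCurveOn_Icc_of_lipschitzWith hK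
      (fun x ↦ (hcont x).continuousOn) (t₀ := t₀) (by simp) x₀
    rw [← Real.closedBall_eq_Icc] at hγ
    exact ⟨γ, hγ₀, hγ.mono (ball_subset_closedBall.trans (closedBall_subset_closedBall
      (le_abs_self r)))⟩
  choose γ hγ₀ hγ using exists_on_ball
  refine ⟨fun t ↦ γ (dist t t₀ + 1) t, hγ₀ _,
    isIntegralCurve_of_forall_isIntegralCurveOn_ball (fun r ↦ ?_) hγ₀ hγ⟩
  obtain ⟨K, hK⟩ := hlip (t₀ - r) (t₀ + r)
  rw [← Real.closedBall_eq_Icc] at hK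
  exact ⟨K, fun t ht ↦ hK t (ball_subset_closedBall ht)⟩

end IntegralCurve

lemma lipschitzWith_sigmoid : LipschitzWith 1 sigmoid := by
  refine lipschitzWith_of_nnnorm_deriv_le differentiable_sigmoid fun x ↦ ?_
  rw [← NNReal.coe_le_coe, coe_nnnorm, NNReal.coe_one, (hasDerivAt_sigmoid x).deriv,
    ← sigmoid_neg, norm_of_nonneg (mul_nonneg (sigmoid_nonneg _) (sigmoid_nonneg _))]
  exact mul_le_one₀ (sigmoid_le_one x) (sigmoid_nonneg _) (sigmoid_le_one _)

lemma sigmoid_div_one_sub_sigmoid (x : ℝ) : sigmoid x / (1 - sigmoid x) = exp x := by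
  rw [← sigmoid_neg, ← sigmoid_mul_rexp_neg, div_mul_cancel_left₀ (sigmoid_pos x).ne', exp_neg,
    inv_inv]

/-- The time-dependent vector field on phase space `(w, w')` whose integral curves are the solutions
of `w'' = σ(½ t w' - w)`, where `σ` is the logistic sigmoid. -/
noncomputable def phaseField (t : ℝ) (x : ℝ × ℝ) : ℝ × ℝ :=
  (x.2, sigmoid ((1 / 2) * t * x.2 - x.1))

lemma contDiff_uncurry_phaseField : ContDiff ℝ ∞ (Function.uncurry phaseField) := by
  have hsigmoid : ContDiff ℝ ∞ sigmoid := contDiff_sigmoid.of_le le_top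
  exact contDiff_snd.snd.prodMk (hsigmoid.comp
    (((contDiff_const.mul contDiff_fst).mul contDiff_snd.snd).sub contDiff_snd.fst))

lemma lipschitzWith_phaseField (t : ℝ) : LipschitzWith (‖(1 / 2) * t‖₊ + 1) (phaseField t) := by
  have hexponent : LipschitzWith (‖(1 / 2) * t‖₊ + 1) fun x : ℝ × ℝ ↦ (1 / 2) * t * x.2 - x.1 := by
    have hmul : LipschitzWith ‖(1 / 2) * t‖₊ fun x : ℝ × ℝ ↦ (1 / 2) * t * x.2 :=
      ((lipschitzWith_smul ((1 / 2) * t)).comp LipschitzWith.prod_snd).weaken (mul_one _).le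
    exact hmul.sub LipschitzWith.prod_fst
  refine (LipschitzWith.prod_snd.prodMk (lipschitzWith_sigmoid.comp hexponent)).weaken ?_
  rw [one_mul]
  exact max_le le_add_self le_rfl

lemma exists_isIntegralCurve_phaseField (t₀ : ℝ) (x₀ : ℝ × ℝ) :
    ∃ γ : ℝ → ℝ × ℝ, γ t₀ = x₀ ∧ IsIntegralCurve γ phaseField := by
  refine exists_isIntegralCurve_of_lipschitzWith (fun a b ↦ ?_) (fun x ↦ ?_) t₀ x₀
  · have hcont : Continuous fun t : ℝ ↦ ‖(1 / 2) * t‖₊ + 1 := by fun_prop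
    obtain ⟨K, hK⟩ := isCompact_Icc.bddAbove_image (hcont.continuousOn (s := Icc a b))
    exact ⟨K, fun t ht ↦ (lipschitzWith_phaseField t).weaken (hK (mem_image_of_mem _ ht))⟩
  · exact contDiff_uncurry_phaseField.continuous.comp (Continuous.prodMk_left x)

lemma exists_contDiff_deriv_deriv_eq_sigmoid (t₀ w₀ p₀ : ℝ) :
    ∃ w : ℝ → ℝ, ContDiff ℝ ∞ w ∧ w t₀ = w₀ ∧ deriv w t₀ = p₀ ∧
      ∀ t, deriv (deriv w) t = sigmoid ((1 / 2) * t * deriv w t - w t) := by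
  obtain ⟨γ, hγ₀, hγ⟩ := exists_isIntegralCurve_phaseField t₀ (w₀, p₀)
  have hasDerivAt_fst (t : ℝ) : HasDerivAt (fun s ↦ (γ s).1) (γ t).2 t := (hγ t).fst
  have hasDerivAt_snd (t : ℝ) : HasDerivAt (fun s ↦ (γ s).2)
      (sigmoid ((1 / 2) * t * (γ t).2 - (γ t).1)) t := (hγ t).snd
  have deriv_fst : deriv (fun s ↦ (γ s).1) = fun s ↦ (γ s).2 :=
    funext fun t ↦ (hasDerivAt_fst t).deriv
  refine ⟨fun t ↦ (γ t).1, (contDiff_of_isIntegralCurve contDiff_uncurry_phaseField hγ).fst,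
    congrArg Prod.fst hγ₀, ?_, fun t ↦ ?_⟩
  · rw [deriv_fst]
    exact congrArg Prod.snd hγ₀
  · rw [deriv_fst]
    exact (hasDerivAt_snd t).deriv

lemma deriv_zero_eq_zero_of_quadratic {w : ℝ → ℝ} {α β c : ℝ}
    (hode : ∀ t, deriv (deriv w) t / (1 - deriv (deriv w) t)
      = exp ((1 / 2) * t * deriv w t - w t))
    (hw : ∀ t, w t = α * t ^ 2 + β * t + c) : deriv w 0 = 0 := by
  have hw' : deriv w = fun t ↦ α * (2 * t) + β := by
    rw [funext hw]
    ext t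
    simpa using ((((hasDerivAt_pow 2 t).const_mul α).add
      ((hasDerivAt_id t).const_mul β)).add_const c).deriv
  have hw'' : deriv (deriv w) = fun _ ↦ α * 2 := by
    rw [hw']
    ext t
    simp
  have exponent_eq : (1 / 2) * 0 * deriv w 0 - w 0 = (1 / 2) * 1 * deriv w 1 - w 1 :=
    exp_injective <| by rw [← hode, ← hode, hw'']
  simp only [hw', hw] at exponent_eq ⊢
  linarith

theorem ode_nonquadratic_solution :
    ∃ w₁ : ℝ → ℝ, ContDiff ℝ (⊤ : ℕ∞) w₁ ∧
      (∀ t : ℝ, 0 < deriv (deriv w₁) t ∧ deriv (deriv w₁) t < 1) ∧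
      (∀ t : ℝ, deriv (deriv w₁) t / (1 - deriv (deriv w₁) t)
        = Real.exp ((1/2) * t * deriv w₁ t - w₁ t)) ∧
      ¬ ∃ α β c : ℝ, ∀ t : ℝ, w₁ t = α * t ^ 2 + β * t + c := by
  obtain ⟨w, hsmooth, -, hw', hw''⟩ := exists_contDiff_deriv_deriv_eq_sigmoid 0 0 1
  have hode (t : ℝ) : deriv (deriv w) t / (1 - deriv (deriv w) t)
      = exp ((1 / 2) * t * deriv w t - w t) := by
    rw [hw'', sigmoid_div_one_sub_sigmoid]
  refine ⟨w, hsmooth, fun t ↦ ?_, hode, ?_⟩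
  · rw [hw'']
    exact ⟨sigmoid_pos _, sigmoid_lt_one _⟩
  · rintro ⟨α, β, c, hquad⟩
    exact one_ne_zero (hw'.symm.trans (deriv_zero_eq_zero_of_quadratic hode hquad))
end
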